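/- R(f) is free as a right module over its subalgebra R(E) generated by E. -/

import Mathlib

open Polynomial

inductive SmithGen : Type
  | E | F | H

open SmithGen in
inductive SmithRel (f : ℂ[X]) : FreeAlgebra ℂ SmithGen → FreeAlgebra ℂ SmithGen → Prop
  | ef : SmithRel f (FreeAlgebra.ι ℂ E * FreeAlgebra.ι ℂ F - FreeAlgebra.ι ℂ F * FreeAlgebra.ι ℂ E)
      (aeval (FreeAlgebra.ι ℂ H) f)
  | he : SmithRel f (FreeAlgebra.ι ℂ H * FreeAlgebra.ι ℂ E - FreeAlgebra.ι ℂ E * FreeAlgebra.ι ℂ H)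
      (FreeAlgebra.ι ℂ E)
  | hf : SmithRel f (FreeAlgebra.ι ℂ H * FreeAlgebra.ι ℂ F - FreeAlgebra.ι ℂ F * FreeAlgebra.ι ℂ H)
      (-FreeAlgebra.ι ℂ F)

/-- Smith's algebra `R(f)`, similar to `U(sl₂)`. -/
abbrev SmithAlgebra (f : ℂ[X]) : Type := RingQuot (SmithRel f)

noncomputable def SmithE (f : ℂ[X]) : SmithAlgebra f :=
  RingQuot.mkAlgHom ℂ (SmithRel f) (FreeAlgebra.ι ℂ SmithGen.E)

noncomputable def SmithF (f : ℂ[X]) : SmithAlgebra f :=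
  RingQuot.mkAlgHom ℂ (SmithRel f) (FreeAlgebra.ι ℂ SmithGen.F)

noncomputable def SmithH (f : ℂ[X]) : SmithAlgebra f :=
  RingQuot.mkAlgHom ℂ (SmithRel f) (FreeAlgebra.ι ℂ SmithGen.H)

/-- The Casimir element `Ω = 2FE + u(H+1)`. -/
noncomputable def SmithOmega (f u : ℂ[X]) : SmithAlgebra f :=
  2 * SmithF f * SmithE f + aeval (SmithH f) (u.comp (X + 1))

/-!
The theorem is the Poincaré–Birkhoff–Witt statement that the monomials `F ^ i * H ^ j` form a
right basis of `R(f)` over `ℂ[E]`.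

Let `B = ℂ[e]` and let `V` be the free `B`-module on symbols `φ ^ i h ^ j`, realised as
`ℕ →₀ B[h]`. Writing out how left multiplication by `E`, `F`, `H` must act on normally ordered
words `F ^ i p(H) b(E)` gives three `B`-linear operators on `V` (`opE`, `opF`, `opH`). They satisfy
the defining relations, so they define a representation `smithRep` of `R(f)` on `V`. Applied to the
vector `φ ^ 0 h ^ 0`, the element `F ^ i * H ^ j * b(E)` produces `φ ^ i h ^ j b`, which yields
uniqueness of the coefficients (`smithRep_basis`).

Conversely the normal ordering map `V → R(f)`, `φ ^ i p(h) b(e) ↦ F ^ i p(H) b(E)`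
(`smithPhi`), intertwines the representation with left multiplication (`smithPhi_rep`), so that
`r = smithPhi (r • φ ^ 0 h ^ 0)` for each `r`, which yields existence.
-/

/-! ### The representation -/

-- The subtraction on `Module.End ℂ[X] SmithV` needs a deeply nested instance.
set_option maxSynthPendingDepth 8

/-- The module `⨁ᵢ φ ^ i ℂ[e][h]`: the inner variable of `ℂ[X][X]` is `e`, the outer one is `h`. -/
abbrev SmithV : Type := ℕ →₀ ℂ[X][X]

/-- The polynomial `∑_{b < i} f(h - b)`, for which
`E F ^ i = F ^ i E + F ^ (i - 1) ∑_{b < i} f(H - b)`. -/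
noncomputable def smithG (f : ℂ[X]) (i : ℕ) : ℂ[X][X] :=
  ∑ b ∈ Finset.range i, aeval (X - (b : ℂ[X][X])) f

/-- Left multiplication by `F` on normally ordered words. -/
noncomputable def opF : Module.End ℂ[X] SmithV :=
  Finsupp.lsum ℂ[X] fun i => Finsupp.lsingle (i + 1)

/-- Left multiplication by `H` on normally ordered words: `H F ^ i = F ^ i (H - i)`. -/
noncomputable def opH : Module.End ℂ[X] SmithV :=
  Finsupp.lsum ℂ[X] fun i =>
    Finsupp.lsingle i ∘ₗ LinearMap.mulLeft ℂ[X] (X - (i : ℂ[X][X]))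

/-- Left multiplication by `E` on normally ordered words; besides the commutator with `F ^ i` it
uses `E p(H) = p(H - 1) E`. For `i = 0` the truncated index `i - 1` is harmless, since
`smithG f 0 = 0`. -/
noncomputable def opE (f : ℂ[X]) : Module.End ℂ[X] SmithV :=
  Finsupp.lsum ℂ[X] fun i =>
    Finsupp.lsingle i ∘ₗ LinearMap.mulLeft ℂ[X] (C X) ∘ₗ taylor (-1) +
      Finsupp.lsingle (i - 1) ∘ₗ LinearMap.mulLeft ℂ[X] (smithG f i)

lemma opF_single (i : ℕ) (a : ℂ[X][X]) :
    opF (Finsupp.single i a) = Finsupp.single (i + 1) a := by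
  simp [opF]

lemma opH_single (i : ℕ) (a : ℂ[X][X]) :
    opH (Finsupp.single i a) = Finsupp.single i ((X - (i : ℂ[X][X])) * a) := by
  simp [opH]

lemma opE_single (f : ℂ[X]) (i : ℕ) (a : ℂ[X][X]) :
    opE f (Finsupp.single i a) =
      Finsupp.single i (C X * taylor (-1) a) + Finsupp.single (i - 1) (smithG f i * a) := by
  simp [opE]

lemma aeval_opH_single (q : ℂ[X]) (i : ℕ) (a : ℂ[X][X]) :
    (aeval opH q) (Finsupp.single i a) =
      Finsupp.single i (aeval (X - (i : ℂ[X][X])) q * a) := by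
  induction q using Polynomial.induction_on generalizing a with
  | C c => simp [Algebra.smul_def, Module.algebraMap_end_apply]
  | add p q hp hq => simp [hp, hq, add_mul]
  | monomial n c ih =>
    rw [pow_succ, ← mul_assoc, map_mul, aeval_X, Module.End.mul_apply, opH_single, ih]
    simp only [map_mul, aeval_X, mul_assoc]

/-- The images of the three generators in `End V`. -/
noncomputable def smithOp (f : ℂ[X]) : SmithGen → Module.End ℂ[X] SmithV
  | .E => opE f
  | .F => opF
  | .H => opH

lemma op_ef (f : ℂ[X]) : opE f * opF - opF * opE f = aeval opH f := by
  refine Finsupp.lhom_ext fun i a => ?_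
  rw [aeval_opH_single]
  simp only [LinearMap.sub_apply, Module.End.mul_apply, opF_single, opE_single, map_add]
  rcases i with _ | i
  · simp [smithG]
  · simp only [Nat.add_sub_cancel]
    rw [add_sub_add_left_eq_sub, ← Finsupp.single_sub, ← sub_mul]
    congr 2
    rw [smithG, Finset.sum_range_succ, ← smithG, add_sub_cancel_left]

lemma op_he (f : ℂ[X]) : opH * opE f - opE f * opH = opE f := by
  refine Finsupp.lhom_ext fun i a => ?_
  simp only [LinearMap.sub_apply, Module.End.mul_apply, opH_single, opE_single, map_add]
  rw [add_sub_add_comm, ← Finsupp.single_sub, ← Finsupp.single_sub]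
  congr 2
  · have hi : taylor (-1) (i : ℂ[X][X]) = i := by rw [← C_eq_natCast, taylor_C]
    simp only [taylor_mul, map_sub, taylor_X, hi, map_neg, map_one]
    ring
  · rcases i with _ | i
    · simp [smithG]
    · push_cast [Nat.add_sub_cancel]
      ring

lemma op_hf : opH * opF - opF * opH = -opF := by
  refine Finsupp.lhom_ext fun i a => ?_
  simp only [LinearMap.sub_apply, Module.End.mul_apply, opH_single, opF_single,
    LinearMap.neg_apply]
  rw [← Finsupp.single_sub, ← Finsupp.single_neg]
  congr 1
  push_cast
  ring

/-- The representation of `R(f)` on `V`. -/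
noncomputable def smithRep (f : ℂ[X]) : SmithAlgebra f →ₐ[ℂ] Module.End ℂ[X] SmithV :=
  RingQuot.liftAlgHom ℂ ⟨FreeAlgebra.lift ℂ (smithOp f), by
    intro x y h
    cases h with
    | ef => simpa [smithOp, ← aeval_algHom_apply] using op_ef f
    | he => simpa [smithOp] using op_he f
    | hf => simpa [smithOp] using op_hf⟩

lemma smithRep_E (f : ℂ[X]) : smithRep f (SmithE f) = opE f := by
  simp [smithRep, SmithE, smithOp]

lemma smithRep_F (f : ℂ[X]) : smithRep f (SmithF f) = opF := by
  simp [smithRep, SmithF, smithOp]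

lemma smithRep_H (f : ℂ[X]) : smithRep f (SmithH f) = opH := by
  simp [smithRep, SmithH, smithOp]

lemma aeval_opE_single (f b : ℂ[X]) :
    (aeval (opE f) b) (Finsupp.single 0 1) = Finsupp.single 0 (C b) := by
  induction b using Polynomial.induction_on with
  | C c => simp [Algebra.smul_def, Module.algebraMap_end_apply, Polynomial.algebraMap_apply]
  | add p q hp hq => simp [hp, hq]
  | monomial n c ih =>
    rw [pow_succ', mul_left_comm, map_mul, aeval_X, Module.End.mul_apply, ih, opE_single]
    simp [smithG]

lemma opF_pow_single (n i : ℕ) (a : ℂ[X][X]) :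
    (opF ^ n) (Finsupp.single i a) = Finsupp.single (i + n) a := by
  induction n with
  | zero => simp
  | succ n ih => rw [pow_succ', Module.End.mul_apply, ih, opF_single, add_assoc]

/-- The word `F ^ i H ^ j b(E)` sends `φ ^ 0 h ^ 0` to `φ ^ i h ^ j b(e)`. -/
lemma smithRep_basis (f b : ℂ[X]) (i j : ℕ) :
    smithRep f (SmithF f ^ i * SmithH f ^ j * aeval (SmithE f) b) (Finsupp.single 0 1) =
      Finsupp.single i (monomial j b) := by
  have hH := aeval_opH_single (X ^ j) 0 (C b)
  simp only [map_pow, aeval_X, Nat.cast_zero, sub_zero] at hH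
  simp only [map_mul, map_pow, ← aeval_algHom_apply, smithRep_E, smithRep_F, smithRep_H,
    Module.End.mul_apply]
  rw [aeval_opE_single, hH, opF_pow_single, zero_add, X_pow_mul_C, C_mul_X_pow_eq_monomial]

/-! ### Normal ordering -/

lemma smith_ef (f : ℂ[X]) :
    SmithE f * SmithF f = SmithF f * SmithE f + aeval (SmithH f) f := by
  have h := RingQuot.mkAlgHom_rel ℂ (SmithRel.ef (f := f))
  simp only [map_sub, map_mul, ← aeval_algHom_apply] at h
  exact eq_add_of_sub_eq' h

lemma smith_he (f : ℂ[X]) :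
    SmithE f * SmithH f = (SmithH f - 1) * SmithE f := by
  have h := RingQuot.mkAlgHom_rel ℂ (SmithRel.he (f := f))
  simp only [map_sub, map_mul] at h
  change SmithH f * SmithE f - SmithE f * SmithH f = SmithE f at h
  rw [sub_mul, one_mul]
  nth_rewrite 3 [← h]
  abel

lemma smith_hf (f : ℂ[X]) :
    SmithH f * SmithF f = SmithF f * (SmithH f - 1) := by
  have h := RingQuot.mkAlgHom_rel ℂ (SmithRel.hf (f := f))
  simp only [map_sub, map_mul, map_neg] at h
  change SmithH f * SmithF f - SmithF f * SmithH f = -SmithF f at h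
  rw [mul_sub, mul_one, sub_eq_add_neg, ← h]
  abel

lemma smith_H_F_pow (f : ℂ[X]) (i : ℕ) :
    SmithH f * SmithF f ^ i = SmithF f ^ i * (SmithH f - (i : SmithAlgebra f)) := by
  induction i with
  | zero => simp
  | succ i ih =>
    rw [pow_succ, ← mul_assoc, ih, mul_assoc, sub_mul, smith_hf, (Nat.cast_commute i _).eq,
      ← mul_sub, ← mul_assoc]
    push_cast
    rw [sub_sub, add_comm]

lemma smith_aeval_H_F_pow (f q : ℂ[X]) (i : ℕ) :
    aeval (SmithH f) q * SmithF f ^ i =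
      SmithF f ^ i * aeval (SmithH f - (i : SmithAlgebra f)) q := by
  induction q using Polynomial.induction_on with
  | C c => simp [Algebra.commutes]
  | add p q hp hq => simp [hp, hq, add_mul, mul_add]
  | monomial n c ih =>
    rw [pow_succ, ← mul_assoc, map_mul _ _ X, map_mul _ _ X, aeval_X, aeval_X, mul_assoc,
      smith_H_F_pow, ← mul_assoc, ih, mul_assoc]

/-- The map `p(h) b(e) ↦ p(H) b(E)` from `ℂ[e][h]` to `R(f)`. -/
noncomputable def smithTheta (f : ℂ[X]) : ℂ[X][X] →ₗ[ℂ] SmithAlgebra f :=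
  Polynomial.lsum fun j =>
    LinearMap.mulLeft ℂ (SmithH f ^ j) ∘ₗ (aeval (SmithE f)).toLinearMap

lemma smithTheta_monomial (f b : ℂ[X]) (j : ℕ) :
    smithTheta f (monomial j b) = SmithH f ^ j * aeval (SmithE f) b := by
  simp [smithTheta, Polynomial.lsum_apply, sum_monomial_index]

lemma smithTheta_X_mul (f : ℂ[X]) (p : ℂ[X][X]) :
    smithTheta f (X * p) = SmithH f * smithTheta f p := by
  induction p using Polynomial.induction_on' with
  | add p q hp hq => simp only [mul_add, map_add, hp, hq]
  | monomial n b =>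
    rw [X_mul_monomial, smithTheta_monomial, smithTheta_monomial, pow_succ', mul_assoc]

lemma smithTheta_X_sub_mul (f : ℂ[X]) (i : ℕ) (p : ℂ[X][X]) :
    smithTheta f ((X - (i : ℂ[X][X])) * p) =
      (SmithH f - (i : SmithAlgebra f)) * smithTheta f p := by
  rw [sub_mul, sub_mul, map_sub, smithTheta_X_mul, ← nsmul_eq_mul, map_nsmul, nsmul_eq_mul]

lemma smithTheta_aeval_mul (f q : ℂ[X]) (i : ℕ) (p : ℂ[X][X]) :
    smithTheta f (aeval (X - (i : ℂ[X][X])) q * p) =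
      aeval (SmithH f - (i : SmithAlgebra f)) q * smithTheta f p := by
  induction q using Polynomial.induction_on generalizing p with
  | C c => simp only [aeval_C, ← Algebra.smul_def, map_smul]
  | add p q hp hq => simp only [map_add, add_mul, hp, hq]
  | monomial n c ih =>
    rw [pow_succ, ← mul_assoc, map_mul (aeval _) _ X, map_mul (aeval _) _ X, aeval_X, aeval_X,
      mul_assoc, ih, smithTheta_X_sub_mul, mul_assoc]

lemma smith_E_mul_theta (f : ℂ[X]) (p : ℂ[X][X]) :
    SmithE f * smithTheta f p = smithTheta f (C X * taylor (-1) p) := by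
  induction p using Polynomial.induction_on with
  | C b =>
    rw [taylor_C, ← C_mul, ← monomial_zero_left, ← monomial_zero_left, smithTheta_monomial,
      smithTheta_monomial]
    simp
  | add p q hp hq => simp only [map_add, mul_add, hp, hq]
  | monomial n b ih =>
    have h1 : (C b * X ^ (n + 1) : ℂ[X][X]) = X * (C b * X ^ n) := by ring
    have h2 : (C X * taylor (-1) (X * (C b * X ^ n)) : ℂ[X][X]) =
        (X - ((1 : ℕ) : ℂ[X][X])) * (C X * taylor (-1) (C b * X ^ n)) := by
      rw [taylor_mul (-1) X, taylor_X]
      simp only [map_neg, map_one, Nat.cast_one]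
      ring
    rw [h1, smithTheta_X_mul, ← mul_assoc, smith_he, mul_assoc, ih, h2, smithTheta_X_sub_mul,
      Nat.cast_one]

lemma smith_E_F_pow_theta (f : ℂ[X]) (i : ℕ) (p : ℂ[X][X]) :
    SmithE f * (SmithF f ^ i * smithTheta f p) =
      SmithF f ^ i * (SmithE f * smithTheta f p) +
        SmithF f ^ (i - 1) * smithTheta f (smithG f i * p) := by
  induction i with
  | zero => simp [smithG]
  | succ i ih =>
    have hG : smithTheta f (smithG f (i + 1) * p) = smithTheta f (smithG f i * p) +
        aeval (SmithH f - (i : SmithAlgebra f)) f * smithTheta f p := by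
      rw [smithG, Finset.sum_range_succ, ← smithG, add_mul, map_add, smithTheta_aeval_mul]
    -- For `i = 0` both sides vanish, because `smithG f 0 = 0`.
    have hF : SmithF f * (SmithF f ^ (i - 1) * smithTheta f (smithG f i * p)) =
        SmithF f ^ i * smithTheta f (smithG f i * p) := by
      rcases i with _ | i
      · simp [smithG]
      · rw [← mul_assoc, ← pow_succ', Nat.add_sub_cancel]
    rw [Nat.add_sub_cancel, hG, pow_succ', mul_assoc, ← mul_assoc (SmithE f), smith_ef, add_mul,
      mul_assoc, ih, mul_add, hF, ← mul_assoc (aeval _ _), smith_aeval_H_F_pow, mul_add,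
      mul_assoc, mul_assoc, add_assoc]

/-- The normal ordering map `φ ^ i p(h) b(e) ↦ F ^ i p(H) b(E)`. -/
noncomputable def smithPhi (f : ℂ[X]) : SmithV →ₗ[ℂ] SmithAlgebra f :=
  Finsupp.lsum ℂ fun i => LinearMap.mulLeft ℂ (SmithF f ^ i) ∘ₗ smithTheta f

lemma smithPhi_single (f : ℂ[X]) (i : ℕ) (p : ℂ[X][X]) :
    smithPhi f (Finsupp.single i p) = SmithF f ^ i * smithTheta f p := by
  simp [smithPhi]

lemma smithPhi_opE (f : ℂ[X]) (v : SmithV) :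
    smithPhi f (opE f v) = SmithE f * smithPhi f v := by
  induction v using Finsupp.induction_linear with
  | zero => simp
  | add v w hv hw => simp only [map_add, mul_add, hv, hw]
  | single i p =>
    rw [opE_single, map_add, smithPhi_single, smithPhi_single, smithPhi_single,
      smith_E_F_pow_theta, smith_E_mul_theta]

lemma smithPhi_opF (f : ℂ[X]) (v : SmithV) :
    smithPhi f (opF v) = SmithF f * smithPhi f v := by
  induction v using Finsupp.induction_linear with
  | zero => simp
  | add v w hv hw => simp only [map_add, mul_add, hv, hw]
  | single i p => rw [opF_single, smithPhi_single, smithPhi_single, pow_succ', mul_assoc]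

lemma smithPhi_opH (f : ℂ[X]) (v : SmithV) :
    smithPhi f (opH v) = SmithH f * smithPhi f v := by
  induction v using Finsupp.induction_linear with
  | zero => simp
  | add v w hv hw => simp only [map_add, mul_add, hv, hw]
  | single i p =>
    rw [opH_single, smithPhi_single, smithPhi_single, smithTheta_X_sub_mul, ← mul_assoc,
      ← smith_H_F_pow, mul_assoc]

/-- Normal ordering intertwines the representation with left multiplication. -/
lemma smithPhi_rep (f : ℂ[X]) (r : SmithAlgebra f) (v : SmithV) :
    smithPhi f (smithRep f r v) = r * smithPhi f v := by
  obtain ⟨x, rfl⟩ := RingQuot.mkAlgHom_surjective ℂ (SmithRel f) r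
  induction x using FreeAlgebra.induction generalizing v with
  | grade0 c =>
    simp only [AlgHom.commutes, ← Algebra.smul_def, Module.algebraMap_end_apply, map_smul]
  | grade1 g =>
    cases g with
    | E =>
      change smithPhi f (smithRep f (SmithE f) v) = SmithE f * smithPhi f v
      rw [smithRep_E, smithPhi_opE]
    | F =>
      change smithPhi f (smithRep f (SmithF f) v) = SmithF f * smithPhi f v
      rw [smithRep_F, smithPhi_opF]
    | H =>
      change smithPhi f (smithRep f (SmithH f) v) = SmithH f * smithPhi f v
      rw [smithRep_H, smithPhi_opH]
  | mul x y hx hy => rw [map_mul, map_mul, Module.End.mul_apply, hx, hy, mul_assoc]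
  | add x y hx hy => rw [map_add, map_add, LinearMap.add_apply, map_add, hx, hy, add_mul]

lemma smithPhi_surjective (f : ℂ[X]) : Function.Surjective (smithPhi f) := fun r => by
  refine ⟨smithRep f r (Finsupp.single 0 1), ?_⟩
  rw [smithPhi_rep, smithPhi_single, ← monomial_zero_one, smithTheta_monomial]
  simp

/-! ### Freeness -/

lemma exists_aeval_SmithE (f : ℂ[X]) (a : Algebra.adjoin ℂ {SmithE f}) :
    ∃ b : ℂ[X], aeval (SmithE f) b = (a : SmithAlgebra f) :=
  (Algebra.adjoin_singleton_eq_range_aeval ℂ (SmithE f)).le a.2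

/-- The `ℂ[E]`-linear combination `∑ F ^ i H ^ j a_{ij}`, as an additive map in the
coefficients. -/
noncomputable def smithComb (f : ℂ[X]) :
    (ℕ × ℕ →₀ Algebra.adjoin ℂ {SmithE f}) →+ SmithAlgebra f :=
  Finsupp.liftAddHom fun ij =>
    (AddMonoidHom.mulLeft (SmithF f ^ ij.1 * SmithH f ^ ij.2)).comp
      (Algebra.adjoin ℂ {SmithE f}).toSubring.subtype.toAddMonoidHom

lemma smithComb_apply (f : ℂ[X]) (c : ℕ × ℕ →₀ Algebra.adjoin ℂ {SmithE f}) :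
    smithComb f c = c.sum fun ij a => SmithF f ^ ij.1 * SmithH f ^ ij.2 * (a : SmithAlgebra f) :=
  rfl

lemma smithComb_single (f : ℂ[X]) (ij : ℕ × ℕ) (a : Algebra.adjoin ℂ {SmithE f}) :
    smithComb f (Finsupp.single ij a) =
      SmithF f ^ ij.1 * SmithH f ^ ij.2 * (a : SmithAlgebra f) := by
  rw [smithComb_apply, Finsupp.sum_single_index (by simp)]

/-- The coefficient of `φ ^ i h ^ j` in `r • φ ^ 0 h ^ 0`. -/
noncomputable def smithCoeff (f : ℂ[X]) (ij : ℕ × ℕ) (r : SmithAlgebra f) : ℂ[X] :=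
  (smithRep f r (Finsupp.single 0 1) ij.1).coeff ij.2

lemma smithCoeff_add (f : ℂ[X]) (ij : ℕ × ℕ) (r s : SmithAlgebra f) :
    smithCoeff f ij (r + s) = smithCoeff f ij r + smithCoeff f ij s := by
  simp [smithCoeff]

lemma smithCoeff_zero (f : ℂ[X]) (ij : ℕ × ℕ) : smithCoeff f ij 0 = 0 := by
  simp [smithCoeff]

lemma smithCoeff_word (f b : ℂ[X]) (ij kl : ℕ × ℕ) :
    smithCoeff f kl (SmithF f ^ ij.1 * SmithH f ^ ij.2 * aeval (SmithE f) b) =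
      if ij = kl then b else 0 := by
  obtain ⟨i, j⟩ := ij
  obtain ⟨k, l⟩ := kl
  rw [smithCoeff, smithRep_basis, Finsupp.single_apply]
  by_cases h : i = k <;> simp [h, coeff_monomial]

lemma smithCoeff_aeval (f b : ℂ[X]) : smithCoeff f (0, 0) (aeval (SmithE f) b) = b := by
  simpa using smithCoeff_word f b (0, 0) (0, 0)

lemma smithCoeff_comb (f : ℂ[X]) (kl : ℕ × ℕ) (c : ℕ × ℕ →₀ Algebra.adjoin ℂ {SmithE f}) :
    smithCoeff f kl (smithComb f c) = smithCoeff f (0, 0) (c kl : SmithAlgebra f) := by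
  induction c using Finsupp.induction_linear with
  | zero => simp [smithCoeff_zero]
  | add c d hc hd =>
    rw [map_add, smithCoeff_add, hc, hd, Finsupp.add_apply, AddMemClass.coe_add, smithCoeff_add]
  | single ij a =>
    obtain ⟨b, hb⟩ := exists_aeval_SmithE f a
    rw [smithComb_single, ← hb, smithCoeff_word, Finsupp.single_apply]
    split_ifs
    · rw [← hb, smithCoeff_aeval]
    · rw [ZeroMemClass.coe_zero, smithCoeff_zero]

lemma smithComb_injective (f : ℂ[X]) : Function.Injective (smithComb f) := by
  intro c d h
  ext kl : 2
  obtain ⟨b, hb⟩ := exists_aeval_SmithE f (c kl)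
  obtain ⟨b', hb'⟩ := exists_aeval_SmithE f (d kl)
  have h' := congrArg (smithCoeff f kl) h
  rw [smithCoeff_comb, smithCoeff_comb, ← hb, ← hb', smithCoeff_aeval, smithCoeff_aeval] at h'
  rw [← hb, ← hb', h']

lemma smithComb_surjective (f : ℂ[X]) : Function.Surjective (smithComb f) := by
  intro r
  obtain ⟨v, rfl⟩ := smithPhi_surjective f r
  change smithPhi f v ∈ AddMonoidHom.mrange (smithComb f)
  induction v using Finsupp.induction_linear with
  | zero => rw [map_zero]; exact zero_mem _
  | add v w hv hw => rw [map_add]; exact add_mem hv hw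
  | single i p =>
    induction p using Polynomial.induction_on' with
    | add p q hp hq => rw [Finsupp.single_add, map_add]; exact add_mem hp hq
    | monomial j b =>
      have hb : aeval (SmithE f) b ∈ Algebra.adjoin ℂ {SmithE f} := by
        rw [Algebra.adjoin_singleton_eq_range_aeval]
        exact ⟨b, rfl⟩
      refine ⟨Finsupp.single (i, j) ⟨_, hb⟩, ?_⟩
      rw [smithComb_single, smithPhi_single, smithTheta_monomial, mul_assoc]

/-- `R(f)` is free as a right module over the subalgebra `R(E) = ℂ[E]`: there is a family
`b : I → R(f)` such that every element of `R(f)` is uniquely a finite sum `∑ bᵢ·aᵢ`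
with `aᵢ ∈ R(E)`. -/
theorem smith_free_right_module_over_RE (f : ℂ[X]) :
    ∃ (I : Type) (b : I → SmithAlgebra f),
      Function.Bijective (fun c : I →₀ Algebra.adjoin ℂ {SmithE f} =>
        c.sum fun i a => b i * (a : SmithAlgebra f)) := by
  exact ⟨ℕ × ℕ, fun ij => SmithF f ^ ij.1 * SmithH f ^ ij.2,
    smithComb_injective f, smithComb_surjective f⟩
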